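/- arXiv:1707.08353 — 5 statements merged into one kernel-verified Lean document; each statement's English description precedes it below -/
import Mathlib

section
/- For all odd natural numbers n, m ≥ 3, the dihedral-type Artin groups I_2(n) and I_2(m) are elementarily equivalent in the first-order language of groups if and only if n = m. -/
/-!
Write `n = 2k + 1`, `a = xy` and `b = ⟨x,y⟩ⁿ = aᵏx` in `I₂(n)`. These elements generate the group, and
`aⁿ = b²` is therefore central. Killing it gives the free product `C₂ * Cₙ`, which has trivial
center, so this free product is the quotient of `I₂(n)` by its center (`toFree_eq_one_iff`).

For `n ≥ 1`, a first-order sentence `orderSentence n` says that some element has order exactly `n`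
modulo the center. It holds in `I₂(n)`, witnessed by `a`. If it holds in `I₂(m)`, then `C₂ * Cₘ` has
an element of order `n`. By cyclic reduction (`exists_isConj`) a torsion element of a free product is
conjugate into a factor, so `n ∣ 2` or `n ∣ m`, and `n ∣ m` since `n ≥ 3`. Exchanging the roles of
`n` and `m` gives `n = m`.
-/


open FirstOrder FreeGroup

/-- Function symbols of the first-order language of groups: a constant `1`,
a unary function `⁻¹`, and a binary function `*`. -/
inductive GrpFunc : ℕ → Type
  | one : GrpFunc 0
  | inv : GrpFunc 1
  | mul : GrpFunc 2

/-- The first-order language of groups. -/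
def grpLang : FirstOrder.Language := ⟨GrpFunc, fun _ => Empty⟩

/-- The canonical interpretation of the language of groups in any group. -/
instance grpStructure (G : Type*) [Group G] : grpLang.Structure G where
  funMap {_} f := match f with
    | .one => fun _ => 1
    | .inv => fun v => (v 0)⁻¹
    | .mul => fun v => v 0 * v 1
  RelMap {_} r := Empty.elim r

/-- The alternating product `⟨x,y⟩^m = xyxy⋯` of length `m`. -/
def altProd {M : Type*} [Monoid M] (x y : M) : ℕ → M
  | 0 => 1
  | k + 1 => x * altProd y x k

/-- The single relator `⟨x,y⟩ⁿ (⟨y,x⟩ⁿ)⁻¹` of the dihedral-type Artin group `I₂(n)`,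
with generators `x = of 0` and `y = of 1`. -/
def ArtinI2Rels (n : ℕ) : Set (FreeGroup (Fin 2)) :=
  {altProd (of 0) (of 1) n * (altProd (of 1) (of 0) n)⁻¹}

/-- The dihedral-type Artin group `I₂(n)`. -/
abbrev ArtinI2 (n : ℕ) : Type := PresentedGroup (ArtinI2Rels n)

/-! ### Free products -/

namespace Monoid.CoprodI

variable {ι : Type*} {G : ι → Type*} [∀ i, Group (G i)]

theorem Word.prod_inj {u v : Word G} (h : u.prod = v.prod) : u = v := by
  classical
  exact Word.equiv.symm.injective h

theorem NeWord.toList_eq_of_prod_eq {i j k l : ι} {u : NeWord G i j} {v : NeWord G k l}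
    (h : u.prod = v.prod) : u.toList = v.toList :=
  congrArg Word.toList (Word.prod_inj (u := u.toWord) (v := v.toWord) h)

theorem NeWord.prod_ne_one {i j : ι} (w : NeWord G i j) : w.prod ≠ 1 := fun h =>
  w.toList_ne_nil (congrArg Word.toList (Word.prod_inj (u := w.toWord) (v := Word.empty) h))

/-- Powers of a cyclically reduced word are again reduced. -/
theorem NeWord.exists_prod_eq_pow {i j : ι} (w : NeWord G i j) (hij : i ≠ j) (n : ℕ) :
    ∃ v : NeWord G i j, v.prod = w.prod ^ (n + 1) := by
  induction n with
  | zero => exact ⟨w, by simp⟩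
  | succ n ih =>
    obtain ⟨v, hv⟩ := ih
    exact ⟨.append v hij.symm w, by rw [append_prod, hv, pow_succ _ (n + 1)]⟩

/-- Cyclic reduction, for an element given by a reduced word: if the first and last letter lie in
the same factor, conjugating by the last letter yields a shorter word. -/
theorem exists_isConj_word [Nonempty ι] (N : ℕ) : ∀ w : Word G, w.toList.length = N →
    (∃ (i : ι) (x : G i), IsConj w.prod (of x)) ∨
      ∃ (i j : ι) (v : NeWord G i j), i ≠ j ∧ IsConj w.prod v.prod := by
  induction N using Nat.strong_induction_on with
  | _ N ih =>
  intro w hN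
  by_cases hw : w = Word.empty
  · exact .inl ⟨Classical.arbitrary ι, 1, by rw [hw, _root_.map_one, Word.prod_empty]⟩
  obtain ⟨i, j, v, rfl⟩ := NeWord.of_word w hw
  by_cases hij : i = j
  swap
  · exact .inr ⟨i, j, v, hij, IsConj.refl _⟩
  subst hij
  obtain ⟨l, hl⟩ : ∃ l, v.toWord.toList = ⟨i, v.head⟩ :: l := by
    have := v.toList_head?
    exact List.head?_eq_some_iff.1 this
  have hne := v.toWord.ne_one
  have hch := v.toWord.chain_ne
  have hprod : v.toWord.prod = (v.toWord.toList.map fun l => of l.snd).prod := rfl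
  have hlast : v.toWord.toList.getLast? = some ⟨i, v.last⟩ := v.toList_getLast?
  generalize v.toWord = w at *
  generalize v.head = x at *
  generalize v.last = y at *
  rcases List.eq_nil_or_concat l with rfl | ⟨t, z, rfl⟩
  · exact .inl ⟨i, x, by rw [hprod, hl, List.map_singleton, List.prod_singleton]⟩
  rw [List.concat_eq_append] at hl
  have hz : z = ⟨i, y⟩ := by
    rw [hl, ← List.cons_append, List.getLast?_concat] at hlast
    exact Option.some.inj hlast
  subst hz
  rw [hl] at hne hch hprod hN
  have hconj : IsConj w.prod (of (y * x) * (t.map fun l => of l.snd).prod) := by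
    rw [isConj_iff]
    refine ⟨of y, ?_⟩
    rw [hprod]
    simp [mul_assoc]
  rw [← List.cons_append] at hch
  have hch' : List.IsChain (fun l l' : Σ i, G i => l.1 ≠ l'.1) (⟨i, x⟩ :: t) :=
    hch.left_of_append
  by_cases hyx : y * x = 1
  · rw [hyx, _root_.map_one, one_mul] at hconj
    have := ih t.length (by simp at hN; omega)
      ⟨t, fun l hl => hne l (by simp [hl]), hch'.tail⟩ rfl
    refine this.imp ?_ ?_
    · rintro ⟨k, c, hc⟩
      exact ⟨k, c, hconj.trans hc⟩
    · rintro ⟨k, k', c, hk, hc⟩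
      exact ⟨k, k', c, hk, hconj.trans hc⟩
  · have hch'' : List.IsChain (fun l l' : Σ i, G i => l.1 ≠ l'.1) (⟨i, y * x⟩ :: t) := by
      rw [List.isChain_cons] at hch' ⊢
      exact hch'
    have := ih (t.length + 1) (by simp at hN; omega)
      ⟨⟨i, y * x⟩ :: t, by
        intro l hl
        rcases List.mem_cons.1 hl with rfl | hl
        · exact hyx
        · exact hne l (by simp [hl]), hch''⟩ rfl
    have hp : (of (y * x) * (t.map fun l => of l.snd).prod : CoprodI G) =
      Word.prod ⟨⟨i, y * x⟩ :: t, by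
        intro l hl
        rcases List.mem_cons.1 hl with rfl | hl
        · exact hyx
        · exact hne l (by simp [hl]), hch''⟩ := by
      simp [Word.prod]
    rw [hp] at hconj
    refine this.imp ?_ ?_
    · rintro ⟨k, c, hc⟩
      exact ⟨k, c, hconj.trans hc⟩
    · rintro ⟨k, k', c, hk, hc⟩
      exact ⟨k, k', c, hk, hconj.trans hc⟩

/-- Every element of a free product is conjugate to an element of a factor or to a cyclically
reduced word of length at least two. -/
theorem exists_isConj [Nonempty ι] (h : CoprodI G) :
    (∃ (i : ι) (x : G i), IsConj h (of x)) ∨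
      ∃ (i j : ι) (v : NeWord G i j), i ≠ j ∧ IsConj h v.prod := by
  classical
  have := exists_isConj_word _ (Word.equiv h) rfl
  rwa [show (Word.equiv h).prod = h from Word.equiv.symm_apply_apply h] at this

theorem exists_isConj_of_pow_eq_one [Nonempty ι] {h : CoprodI G} {n : ℕ} (hn : n ≠ 0)
    (hh : h ^ n = 1) : ∃ (i : ι) (x : G i), IsConj h (of x) := by
  rcases exists_isConj h with h1 | ⟨i, j, v, hij, hv⟩
  · exact h1
  · obtain ⟨k, rfl⟩ := Nat.exists_eq_succ_of_ne_zero hn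
    obtain ⟨u, hu⟩ := v.exists_prod_eq_pow hij k
    have := hv.pow (k + 1)
    rw [hh, isConj_one_right, ← hu] at this
    exact (u.prod_ne_one this).elim

theorem center_trivial [Nontrivial ι] [∀ i, Nontrivial (G i)] {h : CoprodI G}
    (hc : ∀ g, h * g = g * h) : h = 1 := by
  have key : ∀ g, IsConj h g → h = g := by
    intro g hg
    obtain ⟨c, rfl⟩ := isConj_iff.1 hg
    rw [← hc c, mul_inv_cancel_right]
  rcases exists_isConj h with ⟨i, x, hx⟩ | ⟨i, j, v, hij, hv⟩
  · have e := key _ hx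
    by_contra h1
    have hx1 : x ≠ 1 := by
      rintro rfl
      exact h1 (by rw [e, _root_.map_one])
    obtain ⟨j, hj⟩ := exists_ne i
    obtain ⟨c, hc1⟩ := exists_ne (1 : G j)
    -- the commutator of letters from different factors is a reduced word
    let w : NeWord G i j := .append (.append (.singleton x hx1) hj.symm (.singleton c hc1)) hj
      (.append (.singleton x⁻¹ (inv_ne_one.2 hx1)) hj.symm (.singleton c⁻¹ (inv_ne_one.2 hc1)))
    apply w.prod_ne_one
    have := hc (of c)
    rw [e] at this
    simp [w, this, mul_assoc]
  · have e := key _ hv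
    obtain ⟨c, hc1⟩ := exists_ne (1 : G i)
    -- `v c v⁻¹` is reduced of length at least three, so it cannot equal the single letter `c`
    let w : NeWord G i i := .append v hij.symm (.append (.singleton c hc1) hij v.inv)
    have hw : w.prod = (NeWord.singleton c hc1).prod := by
      have := hc (of c)
      rw [e] at this
      simp [w, ← mul_assoc, this]
    have hlen := congrArg List.length (NeWord.toList_eq_of_prod_eq hw)
    have h1 := List.length_pos_iff.2 v.toList_ne_nil
    simp [w] at hlen
    omega

end Monoid.CoprodI

/-! ### The sentence -/

/-- Some `g` satisfies: `gⁿ` is central, and `gᵈ` is not central for `0 < d < n`. For `n ≥ 1` this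
says that `g` has order exactly `n` modulo the center. -/
def HasOrderModCenter (n : ℕ) (G : Type*) [Group G] : Prop :=
  ∃ g : G, (∀ h : G, g ^ n * h = h * g ^ n) ∧
    ∀ d : Fin n, 0 < (d : ℕ) → ∃ h : G, g ^ (d : ℕ) * h ≠ h * g ^ (d : ℕ)

section

open FirstOrder.Language

/-- The product of two terms. -/
def termMul {α : Type} (s t : grpLang.Term α) : grpLang.Term α :=
  Functions.apply₂ (L := grpLang) GrpFunc.mul s t

/-- The `d`-th power of a term. -/
def termPow {α : Type} (t : grpLang.Term α) : ℕ → grpLang.Term α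
  | 0 => Constants.term (L := grpLang) GrpFunc.one
  | d + 1 => termMul (termPow t d) t

theorem realize_termMul {G : Type*} [Group G] {α : Type} (s t : grpLang.Term α) (v : α → G) :
    (termMul s t).realize v = s.realize v * t.realize v := by
  exact Term.realize_functions_apply₂ (L := grpLang)

theorem realize_termPow {G : Type*} [Group G] {α : Type} (t : grpLang.Term α) (v : α → G) (d : ℕ) :
    (termPow t d).realize v = t.realize v ^ d := by
  induction d with
  | zero =>
    rw [pow_zero]
    rfl
  | succ d ih => rw [termPow, realize_termMul, ih, pow_succ]

/-- The formula saying that the `d`-th power of the first variable commutes with the second. -/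
def commFormula (d : ℕ) : grpLang.BoundedFormula Empty 2 :=
  Term.bdEqual (termMul (termPow (&0) d) (&1)) (termMul (&1) (termPow (&0) d))

theorem realize_commFormula {G : Type*} [Group G] (d : ℕ) (v : Empty → G) (xs : Fin 2 → G) :
    (commFormula d).Realize v xs ↔ xs 0 ^ d * xs 1 = xs 1 * xs 0 ^ d := by
  rw [commFormula, BoundedFormula.realize_bdEqual]
  simp only [realize_termMul, realize_termPow]
  rfl

/-- The first-order sentence expressing `HasOrderModCenter n`. -/
noncomputable def orderSentence (n : ℕ) : grpLang.Sentence :=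
  BoundedFormula.ex ((commFormula n).all ⊓
    BoundedFormula.iInf fun d : {d : Fin n // 0 < (d : ℕ)} => (commFormula d).not.ex)

theorem realize_orderSentence (n : ℕ) (G : Type*) [Group G] :
    G ⊨ orderSentence n ↔ HasOrderModCenter n G := by
  rw [Sentence.Realize, Formula.Realize, orderSentence, BoundedFormula.realize_ex]
  refine exists_congr fun g => ?_
  rw [BoundedFormula.realize_inf, BoundedFormula.realize_all, BoundedFormula.realize_iInf]
  refine and_congr (forall_congr' fun h => ?_) ?_
  · rw [realize_commFormula]
    rfl
  · rw [Subtype.forall]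
    refine forall_congr' fun d => forall_congr' fun _ => ?_
    rw [BoundedFormula.realize_ex]
    refine exists_congr fun h => ?_
    rw [BoundedFormula.realize_not, realize_commFormula]
    rfl

end

/-! ### The Artin group and its quotient by the center -/

theorem altProd_succ_eq {M : Type*} [Monoid M] (x y : M) (k : ℕ) :
    altProd x y (2 * k + 1) = (x * y) ^ k * x := by
  induction k with
  | zero => simp [altProd]
  | succ k ih =>
    rw [pow_succ', mul_assoc, ← ih, mul_assoc]
    rfl

theorem map_altProd {M N : Type*} [Monoid M] [Monoid N] (f : M →* N) (x y : M) (k : ℕ) :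
    f (altProd x y k) = altProd (f x) (f y) k := by
  induction k generalizing x y with
  | zero => exact _root_.map_one f
  | succ k ih => simp [altProd, ih]

/-- The factors of `C₂ * Cₙ`: `C₂` at `false` and `Cₙ` at `true`, written multiplicatively. -/
abbrev Factor (n : ℕ) (b : Bool) : Type := Multiplicative (ZMod (cond b n 2))

/-- The free product `C₂ * Cₙ`. -/
abbrev FreeC2Cn (n : ℕ) : Type := Monoid.CoprodI (Factor n)

theorem factor_pow (n : ℕ) (b : Bool) (x : Factor n b) : x ^ (cond b n 2) = 1 := by
  apply Multiplicative.toAdd.injective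
  rw [toAdd_pow, toAdd_one, nsmul_eq_mul, ZMod.natCast_self, zero_mul]

/-- The generator of one of the two factors of `C₂ * Cₙ`. -/
def freeGen (n : ℕ) (b : Bool) : FreeC2Cn n :=
  Monoid.CoprodI.of (M := Factor n) (i := b) (Multiplicative.ofAdd 1)

theorem freeGen_pow (n : ℕ) (b : Bool) : freeGen n b ^ (cond b n 2) = 1 := by
  rw [freeGen, ← map_pow, factor_pow, _root_.map_one]

theorem freeGen_true_pow_eq_one_iff (n d : ℕ) : freeGen n true ^ d = 1 ↔ n ∣ d := by
  rw [freeGen, ← map_pow, map_eq_one_iff _ (Monoid.CoprodI.of_injective true), ← ofAdd_nsmul,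
    ofAdd_eq_one, nsmul_one]
  exact ZMod.natCast_eq_zero_iff d n

/-- Homomorphisms out of `C₂ * Cₙ` are given by elements `s`, `t` with `s² = 1` and `tⁿ = 1`. -/
theorem exists_hom {K : Type*} [Group K] (n : ℕ) (s t : K) (hs : s ^ 2 = 1) (ht : t ^ n = 1) :
    ∃ f : FreeC2Cn n →* K, f (freeGen n false) = s ∧ f (freeGen n true) = t := by
  have cyc : ∀ (r : ℕ) (u : K), u ^ r = 1 →
      ∃ f : Multiplicative (ZMod r) →* K, f (Multiplicative.ofAdd 1) = u := by
    intro r u hu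
    refine ⟨AddMonoidHom.toMultiplicativeLeft (ZMod.lift r
      ⟨zmultiplesHom (Additive K) (Additive.ofMul u), ?_⟩), ?_⟩
    · simp [← ofMul_pow, hu]
    · have := ZMod.lift_coe r (⟨zmultiplesHom (Additive K) (Additive.ofMul u), by
        simp [← ofMul_pow, hu]⟩ : {f : ℤ →+ Additive K // f r = 0}) 1
      simp at this
      simpa using congrArg Additive.toMul this
  obtain ⟨f, hf⟩ := cyc 2 s hs
  obtain ⟨g, hg⟩ := cyc n t ht
  refine ⟨Monoid.CoprodI.lift (M := Factor n) fun b => match b with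
    | false => f
    | true => g, ?_, ?_⟩
  · rw [freeGen, Monoid.CoprodI.lift_of]
    exact hf
  · rw [freeGen, Monoid.CoprodI.lift_of]
    exact hg

theorem exists_freeGen_pow (n : ℕ) (b : Bool) (x : Factor n b) :
    ∃ z : ℤ, Monoid.CoprodI.of (M := Factor n) x = freeGen n b ^ z := by
  obtain ⟨z, hz⟩ := ZMod.intCast_surjective (Multiplicative.toAdd x)
  refine ⟨z, ?_⟩
  rw [freeGen, ← map_zpow, ← ofAdd_zsmul, zsmul_one, hz]
  rfl

section Odd

variable (k : ℕ)

/-- The image in `I₂(2k+1)` of the generator `x`. -/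
def genX : ArtinI2 (2 * k + 1) := PresentedGroup.of 0

/-- The image in `I₂(2k+1)` of the generator `y`. -/
def genY : ArtinI2 (2 * k + 1) := PresentedGroup.of 1

/-- `a = xy`. -/
def elA : ArtinI2 (2 * k + 1) := genX k * genY k

/-- `b = ⟨x,y⟩ⁿ = aᵏx`, for `n = 2k+1`. -/
def elB : ArtinI2 (2 * k + 1) := elA k ^ k * genX k

theorem genX_eq : genX k = (elA k ^ k)⁻¹ * elB k := by simp [elB]

theorem genY_eq : genY k = (elB k)⁻¹ * elA k ^ (k + 1) := by
  rw [pow_succ]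
  have h : elA k ^ k * elA k = elA k ^ k * genX k * genY k := (mul_assoc _ _ _).symm
  rw [h, ← elB, inv_mul_cancel_left]

theorem artin_rel : (genX k * genY k) ^ k * genX k = (genY k * genX k) ^ k * genY k := by
  have h : PresentedGroup.mk (ArtinI2Rels (2 * k + 1))
      (altProd (of 0) (of 1) (2 * k + 1) * (altProd (of 1) (of 0) (2 * k + 1))⁻¹) = 1 :=
    PresentedGroup.one_of_mem rfl
  rw [_root_.map_mul, _root_.map_inv, mul_inv_eq_one, map_altProd, map_altProd, altProd_succ_eq,
    altProd_succ_eq] at h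
  exact h

theorem elB_sq : elB k ^ 2 = elA k ^ (2 * k + 1) := by
  have h2 : ∀ j : ℕ, genX k * (genY k * genX k) ^ j = elA k ^ j * genX k := by
    intro j
    induction j with
    | zero => simp
    | succ j ih => rw [pow_succ, ← mul_assoc, ih, pow_succ]; simp [elA, mul_assoc]
  have h3 : elB k = (genY k * genX k) ^ k * genY k := artin_rel k
  rw [sq]
  nth_rw 2 [h3]
  rw [elB, mul_assoc, ← mul_assoc (genX k), h2, mul_assoc, ← mul_assoc (elA k ^ k), ← pow_add,
    ← two_mul, pow_succ]
  rfl

theorem artin_hom_ext {K : Type*} [Group K] {f g : ArtinI2 (2 * k + 1) →* K}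
    (hA : f (elA k) = g (elA k)) (hB : f (elB k) = g (elB k)) : f = g := by
  apply PresentedGroup.ext
  intro i
  have hX : f (genX k) = g (genX k) := by rw [genX_eq]; simp [hA, hB]
  have hY : f (genY k) = g (genY k) := by rw [genY_eq]; simp [hA, hB]
  fin_cases i
  · exact hX
  · exact hY

theorem elA_pow_central : elA k ^ (2 * k + 1) ∈ Subgroup.center (ArtinI2 (2 * k + 1)) := by
  rw [Subgroup.mem_center_iff]
  intro g
  -- conjugation by `aⁿ` fixes the generators `a` and `b`
  have h : (MulAut.conj (elA k ^ (2 * k + 1))).toMonoidHom = MonoidHom.id _ := by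
    apply artin_hom_ext
    · have : elA k ^ (2 * k + 1) * elA k = elA k * elA k ^ (2 * k + 1) := by
        rw [← pow_succ, ← pow_succ']
      exact mul_inv_eq_iff_eq_mul.2 this
    · have : elA k ^ (2 * k + 1) * elB k = elB k * elA k ^ (2 * k + 1) := by
        rw [← elB_sq, ← pow_succ, ← pow_succ']
      exact mul_inv_eq_iff_eq_mul.2 this
  have := DFunLike.congr_fun h g
  simp only [MulEquiv.toMonoidHom_eq_coe, MonoidHom.coe_coe, MulAut.conj_apply,
    MonoidHom.id_apply] at this
  exact (mul_inv_eq_iff_eq_mul.1 this).symm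

theorem freeRel_aux : ∀ r ∈ ArtinI2Rels (2 * k + 1), FreeGroup.lift
    ![(freeGen (2 * k + 1) true ^ k)⁻¹ * freeGen (2 * k + 1) false,
      (freeGen (2 * k + 1) false)⁻¹ * freeGen (2 * k + 1) true ^ (k + 1)] r = 1 := by
  rintro r rfl
  rw [_root_.map_mul, _root_.map_inv, mul_inv_eq_one, map_altProd, map_altProd, altProd_succ_eq,
    altProd_succ_eq, FreeGroup.lift_apply_of, FreeGroup.lift_apply_of]
  have ha : freeGen (2 * k + 1) true ^ (2 * k + 1) = 1 := freeGen_pow _ true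
  have hb : freeGen (2 * k + 1) false ^ 2 = 1 := freeGen_pow _ false
  simp only [Matrix.cons_val_zero, Matrix.cons_val_one]
  generalize freeGen (2 * k + 1) true = a at *
  generalize freeGen (2 * k + 1) false = b at *
  have h1 : (a ^ k)⁻¹ * b * (b⁻¹ * a ^ (k + 1)) = a := by
    rw [pow_succ]
    group
  have h2 : b⁻¹ * a ^ (k + 1) * ((a ^ k)⁻¹ * b) = b⁻¹ * a * b⁻¹⁻¹ := by
    rw [pow_succ']
    group
  have hb' : b⁻¹ = b := by rw [inv_eq_iff_mul_eq_one, ← sq, hb]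
  rw [h1, h2, conj_pow, mul_inv_cancel_left, inv_inv, mul_assoc, mul_inv_cancel_left, mul_assoc,
    ← pow_add, show k + (k + 1) = 2 * k + 1 by ring, ha, mul_one, hb']

/-- The quotient map `I₂(n) → C₂ * Cₙ` for `n = 2k+1`, sending `b` and `a` to the generators of
the factors; its values on `x` and `y` come from `x = a⁻ᵏb` and `y = b⁻¹aᵏ⁺¹`. -/
def toFree : ArtinI2 (2 * k + 1) →* FreeC2Cn (2 * k + 1) :=
  PresentedGroup.toGroup (freeRel_aux k)

theorem toFree_elA : toFree k (elA k) = freeGen (2 * k + 1) true := by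
  rw [elA, _root_.map_mul, toFree, genX, genY, PresentedGroup.toGroup.of, PresentedGroup.toGroup.of,
    Matrix.cons_val_zero, Matrix.cons_val_one, Matrix.cons_val_zero, pow_succ]
  group

theorem toFree_elB : toFree k (elB k) = freeGen (2 * k + 1) false := by
  rw [elB, _root_.map_mul, map_pow, toFree_elA, toFree, genX, PresentedGroup.toGroup.of,
    Matrix.cons_val_zero, mul_inv_cancel_left]

theorem toFree_surjective : Function.Surjective (toFree k) := by
  have hgen : ∀ b, freeGen (2 * k + 1) b ∈ (toFree k).range
    | false => ⟨_, toFree_elB k⟩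
    | true => ⟨_, toFree_elA k⟩
  intro h
  change h ∈ (toFree k).range
  induction h using Monoid.CoprodI.induction_on with
  | one => exact one_mem _
  | of b x =>
    obtain ⟨z, hz⟩ := exists_freeGen_pow _ b x
    rw [hz]
    exact zpow_mem (hgen b) z
  | mul u v hu hv => exact mul_mem hu hv

/-- The kernel of `toFree` is the center: the projection to the quotient by the center factors
through `C₂ * Cₙ`, and `C₂ * Cₙ` has trivial center. -/
theorem toFree_eq_one_iff (hk : k ≠ 0) (g : ArtinI2 (2 * k + 1)) :
    toFree k g = 1 ↔ ∀ h, g * h = h * g := by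
  constructor
  · intro hg
    let q := QuotientGroup.mk' (Subgroup.center (ArtinI2 (2 * k + 1)))
    have hA : q (elA k) ^ (2 * k + 1) = 1 := by
      rw [← map_pow]
      exact (QuotientGroup.eq_one_iff _).2 (elA_pow_central k)
    obtain ⟨f, hfB, hfA⟩ := exists_hom (2 * k + 1) (q (elB k)) (q (elA k))
      (by rw [← map_pow, elB_sq, map_pow, hA]) hA
    have hq : f.comp (toFree k) = q := by
      apply artin_hom_ext
      · rw [MonoidHom.comp_apply, toFree_elA, hfA]
      · rw [MonoidHom.comp_apply, toFree_elB, hfB]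
    have h1 : q g = 1 := by rw [← hq, MonoidHom.comp_apply, hg, _root_.map_one]
    have h2 := Subgroup.mem_center_iff.1 ((QuotientGroup.eq_one_iff g).1 h1)
    exact fun h => (h2 h).symm
  · intro hg
    have : ∀ b, Nontrivial (Factor (2 * k + 1) b) := by
      rintro (_ | _)
      · exact inferInstanceAs (Nontrivial (ZMod 2))
      · have : Fact (1 < 2 * k + 1) := ⟨by omega⟩
        exact inferInstanceAs (Nontrivial (ZMod (2 * k + 1)))
    apply Monoid.CoprodI.center_trivial
    intro u
    obtain ⟨v, rfl⟩ := toFree_surjective k u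
    rw [← _root_.map_mul, hg v, _root_.map_mul]

theorem hasOrderModCenter_self (hk : k ≠ 0) :
    HasOrderModCenter (2 * k + 1) (ArtinI2 (2 * k + 1)) := by
  refine ⟨elA k, ?_, ?_⟩
  · rw [← toFree_eq_one_iff k hk, map_pow, toFree_elA, freeGen_true_pow_eq_one_iff]
  · intro d hd
    by_contra! h
    rw [← toFree_eq_one_iff k hk, map_pow, toFree_elA, freeGen_true_pow_eq_one_iff] at h
    exact absurd (Nat.le_of_dvd hd h) (not_le.2 d.2)

theorem dvd_of_hasOrderModCenter (hk : k ≠ 0) (n : ℕ) (hn : 3 ≤ n)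
    (h : HasOrderModCenter n (ArtinI2 (2 * k + 1))) : n ∣ 2 * k + 1 := by
  obtain ⟨g, hg1, hg2⟩ := h
  rw [← toFree_eq_one_iff k hk, map_pow] at hg1
  have hord : orderOf (toFree k g) = n := by
    rw [orderOf_eq_iff (by omega)]
    refine ⟨hg1, fun d hdn hd hd1 => ?_⟩
    rw [← map_pow, toFree_eq_one_iff k hk] at hd1
    obtain ⟨h, hh⟩ := hg2 ⟨d, hdn⟩ hd
    exact hh (hd1 h)
  obtain ⟨b, x, hx⟩ := Monoid.CoprodI.exists_isConj_of_pow_eq_one (by omega) hg1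
  have hpow := hx.pow (cond b (2 * k + 1) 2)
  rw [← map_pow Monoid.CoprodI.of, factor_pow, _root_.map_one, isConj_one_left] at hpow
  have hdvd := orderOf_dvd_of_pow_eq_one hpow
  rw [hord] at hdvd
  cases b with
  | false => exact absurd (Nat.le_of_dvd two_pos hdvd) (by omega)
  | true => exact hdvd

end Odd

theorem dvd_of_elementarilyEquivalent {n m : ℕ} (hn : 3 ≤ n) (hm : 3 ≤ m) (hno : Odd n)
    (hmo : Odd m) (h : grpLang.ElementarilyEquivalent (ArtinI2 n) (ArtinI2 m)) : n ∣ m := by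
  obtain ⟨k, rfl⟩ := hno
  obtain ⟨l, rfl⟩ := hmo
  apply dvd_of_hasOrderModCenter l (by omega) _ hn
  rw [← realize_orderSentence, ← FirstOrder.Language.elementarilyEquivalent_iff.1 h,
    realize_orderSentence]
  exact hasOrderModCenter_self k (by omega)

/-- For odd `n, m ≥ 3`, the dihedral-type Artin groups `I₂(n)` and `I₂(m)` are
elementarily equivalent in the first-order language of groups iff `n = m`. -/
theorem artinI2_odd_elementarilyEquivalent_iff (n m : ℕ) (hn : 3 ≤ n) (hm : 3 ≤ m)
    (hno : Odd n) (hmo : Odd m) :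
    grpLang.ElementarilyEquivalent (ArtinI2 n) (ArtinI2 m) ↔ n = m := by
  constructor
  · intro h
    exact Nat.dvd_antisymm (dvd_of_elementarilyEquivalent hn hm hno hmo h)
      (dvd_of_elementarilyEquivalent hm hn hmo hno h.symm)
  · rintro rfl
    rfl
end

section
/- Let n ≥ 1 and let k > n+1. Then there is no element g of the Artin group A_n (the braid group on n+1 strands) with g^k = (σ_1 σ_2 ⋯ σ_n)^{n+1}. -/
/-!
There is no root because pairwise winding numbers of strands are integers. The number used for an
ordered pair of strands counts the positive crossings in which the first strand starts on the left,
minus the inverse crossings in which it ends on the left. These integers are encoded by an action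
of the braid group on triples `(i, j, m)`, where `i`, `j` are strand positions and `m` is an integer
counter: `σ_s` applies the transposition `(s, s+1)` to `i` and `j`, and adds `1` to `m` if
`(i, j) = (s, s+1)` (`windingHom`). The increment of the counter under `g` depends only on `i, j`
(`windingHom_apply`). The element `σ₁⋯σₙ` acts by a cyclic rotation of the `n+1` positions, and its
`(n+1)`-st power fixes all positions and adds `1` to the counter of every pair `i ≠ j`
(`windingHom_full_twist`).

Suppose `g ^ k` is the full twist with `k > n + 1`. Some `0 < l < k` is such that `g ^ l` fixes two
distinct positions `i`, `j`: if `g` moves some `i`, take `j = g i` and `l ≤ n + 1` a period of `i`;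
otherwise take `l = 1`. If `g ^ l` adds `c` to the counter of `(i, j)`, then computing the increment
of `g ^ (l k) = (g ^ k) ^ l` in two ways gives `k c = l`, which is impossible for `0 < l < k`.
-/

open FreeGroup

/-- Relators of the Artin group of type `Aₙ` (the braid group on `n+1` strands):
`σᵢσⱼσᵢ = σⱼσᵢσⱼ` for `|i-j| = 1` and `σᵢσⱼ = σⱼσᵢ` for `|i-j| ≥ 2`. -/
def ArtinARels (n : ℕ) : Set (FreeGroup (Fin n)) :=
  (⋃ (i : Fin n) (j : Fin n) (_ : (i : ℕ) + 1 = (j : ℕ)),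
    {altProd (of i) (of j) 3 * (altProd (of j) (of i) 3)⁻¹}) ∪
  (⋃ (i : Fin n) (j : Fin n) (_ : (i : ℕ) + 2 ≤ (j : ℕ)),
    {of i * of j * (of j * of i)⁻¹})

/-- The Artin group of type `Aₙ`, i.e. the braid group on `n+1` strands. -/
abbrev ArtinA (n : ℕ) : Type := PresentedGroup (ArtinARels n)

/-- The product `σ₁σ₂⋯σₙ` of the standard generators of the Artin group `Aₙ`. -/
def deltaA (n : ℕ) : ArtinA n := ((List.finRange n).map fun i => PresentedGroup.of i).prod

/-- The action of the generator `σ_s` on triples `(i, j, m)`: both positions are moved by the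
transposition of `s` and `s + 1`, and the counter `m` increases when `(i, j) = (s, s + 1)`.
Positions are arbitrary natural numbers; those beyond the last strand are never moved. -/
def crossing (s : ℕ) : Equiv.Perm (ℕ × ℕ × ℤ) where
  toFun x := (Equiv.swap s (s + 1) x.1, Equiv.swap s (s + 1) x.2.1,
    x.2.2 + if x.1 = s ∧ x.2.1 = s + 1 then 1 else 0)
  invFun x := (Equiv.swap s (s + 1) x.1, Equiv.swap s (s + 1) x.2.1,
    x.2.2 - if x.1 = s + 1 ∧ x.2.1 = s then 1 else 0)
  left_inv := by
    rintro ⟨i, j, m⟩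
    simp only [Prod.mk.injEq, Equiv.swap_apply_def]
    grind
  right_inv := by
    rintro ⟨i, j, m⟩
    simp only [Prod.mk.injEq, Equiv.swap_apply_def]
    grind

theorem crossing_apply (s i j : ℕ) (m : ℤ) :
    crossing s (i, j, m) = (Equiv.swap s (s + 1) i, Equiv.swap s (s + 1) j,
      m + if i = s ∧ j = s + 1 then 1 else 0) := rfl

theorem crossing_braid (s : ℕ) :
    crossing s * crossing (s + 1) * crossing s =
      crossing (s + 1) * crossing s * crossing (s + 1) := by
  ext1 ⟨i, j, m⟩
  simp only [Equiv.Perm.mul_apply, crossing_apply, Equiv.swap_apply_def, Prod.mk.injEq]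
  have hcases (p : ℕ) :
      p = s ∨ p = s + 1 ∨ p = s + 1 + 1 ∨ p ≠ s ∧ p ≠ s + 1 ∧ p ≠ s + 1 + 1 := by omega
  have hs : s ≠ s + 1 + 1 := by omega
  rcases hcases i with rfl | rfl | rfl | ⟨hi₀, hi₁, hi₂⟩ <;>
    rcases hcases j with hj | hj | hj | ⟨hj₀, hj₁, hj₂⟩ <;>
    simp [*, hs.symm]

theorem crossing_comm {s t : ℕ} (h : s + 2 ≤ t) :
    crossing s * crossing t = crossing t * crossing s := by
  ext1 ⟨i, j, m⟩
  simp only [Equiv.Perm.mul_apply, crossing_apply, Equiv.swap_apply_def, Prod.mk.injEq]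
  grind (splits := 40)

theorem swap_braid (s : ℕ) :
    Equiv.swap s (s + 1) * Equiv.swap (s + 1) (s + 1 + 1) * Equiv.swap s (s + 1) =
      Equiv.swap (s + 1) (s + 1 + 1) * Equiv.swap s (s + 1) *
        Equiv.swap (s + 1) (s + 1 + 1) := by
  ext1 i
  simp only [Equiv.Perm.mul_apply, Equiv.swap_apply_def]
  grind

theorem swap_comm_of_far {s t : ℕ} (h : s + 2 ≤ t) :
    Equiv.swap s (s + 1) * Equiv.swap t (t + 1) =
      Equiv.swap t (t + 1) * Equiv.swap s (s + 1) := by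
  ext1 i
  simp only [Equiv.Perm.mul_apply, Equiv.swap_apply_def]
  grind

theorem lift_artinARels {G : Type*} [Group G] (S : ℕ → G)
    (hb : ∀ s, S s * S (s + 1) * S s = S (s + 1) * S s * S (s + 1))
    (hc : ∀ s t, s + 2 ≤ t → S s * S t = S t * S s) (n : ℕ) :
    ∀ r ∈ ArtinARels n, FreeGroup.lift (fun i : Fin n => S i) r = 1 := by
  intro r hr
  simp only [ArtinARels, Set.mem_union, Set.mem_iUnion, Set.mem_singleton_iff] at hr
  rcases hr with ⟨i, j, hij, rfl⟩ | ⟨i, j, hij, rfl⟩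
  · have := hb i
    rw [hij] at this
    simp only [altProd, mul_one, _root_.map_mul, _root_.map_inv,
      FreeGroup.lift_apply_of, mul_inv_eq_one]
    simpa only [mul_assoc] using this
  · simp only [_root_.map_mul, _root_.map_inv, FreeGroup.lift_apply_of, mul_inv_eq_one]
    exact hc _ _ hij

/-- The action of the Artin group on triples `(i, j, m)`, recording in `m` the winding of the
strands starting at `i` and `j`. -/
def windingHom (n : ℕ) : ArtinA n →* Equiv.Perm (ℕ × ℕ × ℤ) :=
  PresentedGroup.toGroup
    (lift_artinARels crossing crossing_braid (fun _ _ => crossing_comm) n)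

/-- The permutation of positions underlying a braid. -/
def positionHom (n : ℕ) : ArtinA n →* Equiv.Perm ℕ :=
  PresentedGroup.toGroup
    (lift_artinARels (fun s => Equiv.swap s (s + 1)) swap_braid (fun _ _ => swap_comm_of_far) n)

theorem windingHom_of {n : ℕ} (s : Fin n) :
    windingHom n (PresentedGroup.of s) = crossing s :=
  PresentedGroup.toGroup.of _

theorem positionHom_of {n : ℕ} (s : Fin n) :
    positionHom n (PresentedGroup.of s) = Equiv.swap (s : ℕ) (s + 1) :=
  PresentedGroup.toGroup.of _

theorem artinA_induction {n : ℕ} {P : ArtinA n → Prop} (h1 : P 1)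
    (hof : ∀ s, P (PresentedGroup.of s)) (hmul : ∀ x y, P x → P y → P (x * y))
    (hinv : ∀ x, P x → P x⁻¹) (g : ArtinA n) : P g := by
  have hg : g ∈ Subgroup.closure (Set.range (PresentedGroup.of (rels := ArtinARels n))) := by
    rw [PresentedGroup.closure_range_of]; trivial
  induction hg using Subgroup.closure_induction with
  | mem x hx => obtain ⟨s, rfl⟩ := hx; exact hof s
  | one => exact h1
  | mul x y _ _ hx hy => exact hmul x y hx hy
  | inv x _ hx => exact hinv x hx

/-- The increment of the counter under `g` is independent of the value of the counter. -/
theorem windingHom_apply {n : ℕ} (g : ArtinA n) :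
    ∃ c : ℕ → ℕ → ℤ, ∀ i j m,
      windingHom n g (i, j, m) = (positionHom n g i, positionHom n g j, m + c i j) := by
  induction g using artinA_induction with
  | h1 => exact ⟨0, by simp⟩
  | hof s => exact ⟨fun i j => if i = s ∧ j = s + 1 then 1 else 0, fun i j m => by
      rw [windingHom_of, positionHom_of, crossing_apply]⟩
  | hmul x y hx hy =>
    obtain ⟨c, hc⟩ := hx
    obtain ⟨d, hd⟩ := hy
    refine ⟨fun i j => d i j + c (positionHom n y i) (positionHom n y j), fun i j m => ?_⟩
    simp [hc, hd, add_assoc]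
  | hinv x hx =>
    obtain ⟨c, hc⟩ := hx
    refine ⟨fun i j => -c ((positionHom n x)⁻¹ i) ((positionHom n x)⁻¹ j), fun i j m => ?_⟩
    rw [_root_.map_inv, Equiv.Perm.inv_eq_iff_eq, hc]
    simp

theorem positionHom_lt {n : ℕ} (g : ArtinA n) :
    ∀ i, positionHom n g i < n + 1 ↔ i < n + 1 := by
  induction g using artinA_induction with
  | h1 => simp
  | hof s =>
    intro i
    have := s.2
    rw [positionHom_of, Equiv.swap_apply_def]
    grind
  | hmul x y hx hy => intro i; rw [_root_.map_mul, Equiv.Perm.mul_apply, hx, hy]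
  | hinv x hx =>
    intro i
    rw [← hx, ← Equiv.Perm.mul_apply, ← _root_.map_mul, mul_inv_cancel,
      _root_.map_one, Equiv.Perm.one_apply]

/-- The product `σ₁⋯σₙ` rotates the positions `0, …, n`; the strand starting at `n` passes over to
position `0`, crossing every other strand once from its right. -/
theorem crossing_prod_apply (n i j : ℕ) (m : ℤ) :
    ((List.range n).map crossing).prod (i, j, m) =
      (if i < n then i + 1 else if i = n then 0 else i,
       if j < n then j + 1 else if j = n then 0 else j,
       m + if j = n ∧ i < n then 1 else 0) := by
  induction n generalizing i j m with
  | zero => simp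
  | succ n ih =>
    rw [List.range_succ, List.map_append, List.prod_append, List.map_singleton,
      List.prod_singleton, Equiv.Perm.mul_apply, crossing_apply, ih]
    simp only [Equiv.swap_apply_def, Prod.mk.injEq]
    grind (splits := 40)

theorem windingHom_deltaA (n : ℕ) :
    windingHom n (deltaA n) = ((List.range n).map crossing).prod := by
  rw [deltaA, map_list_prod, List.map_map, ← List.map_coe_finRange_eq_range, List.map_map]
  congr 2

theorem windingHom_deltaA_pow {n i j : ℕ} (hi : i < n + 1) (hj : j < n + 1) (hij : i ≠ j)
    (m : ℤ) {t : ℕ} (ht : t ≤ n + 1) :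
    (windingHom n (deltaA n) ^ t) (i, j, m) =
      (if i + t < n + 1 then i + t else i + t - (n + 1),
       if j + t < n + 1 then j + t else j + t - (n + 1),
       m + if n + 1 ≤ j + t then 1 else 0) := by
  induction t with
  | zero => simp; omega
  | succ t ih =>
    rw [pow_succ', Equiv.Perm.mul_apply, ih (by omega), windingHom_deltaA, crossing_prod_apply]
    simp only [Prod.mk.injEq]
    grind

theorem windingHom_full_twist {n i j : ℕ} (hi : i < n + 1) (hj : j < n + 1) (hij : i ≠ j)
    (m : ℤ) : windingHom n (deltaA n ^ (n + 1)) (i, j, m) = (i, j, m + 1) := by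
  rw [map_pow, windingHom_deltaA_pow hi hj hij m le_rfl]
  simp only [Prod.mk.injEq]
  grind

/-- Iterating a permutation that fixes two positions and adds `c` to their counter. -/
theorem pow_apply_of_shift {f : Equiv.Perm (ℕ × ℕ × ℤ)} {i j : ℕ} {c : ℤ}
    (h : ∀ m, f (i, j, m) = (i, j, m + c)) (t : ℕ) (m : ℤ) :
    (f ^ t) (i, j, m) = (i, j, m + t * c) := by
  induction t with
  | zero => simp
  | succ t ih =>
    rw [pow_succ', Equiv.Perm.mul_apply, ih, h]
    push_cast
    ring_nf

/-- Pigeonhole: the orbit of a position stays inside the `n + 1` positions of the strands. -/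
theorem exists_period {n : ℕ} (g : ArtinA n) {i : ℕ} (hi : i < n + 1) :
    ∃ l, 0 < l ∧ l ≤ n + 1 ∧ positionHom n (g ^ l) i = i := by
  obtain ⟨a, ha, b, hb, hab, h⟩ := Finset.exists_ne_map_eq_of_card_lt_of_maps_to
    (s := Finset.range (n + 2)) (t := Finset.range (n + 1))
    (f := fun t => positionHom n (g ^ t) i) (by simp)
    (fun t _ => by simpa using (positionHom_lt (g ^ t) i).2 hi)
  simp only [Finset.mem_range] at ha hb
  wlog hlt : a < b generalizing a b
  · exact this b a hab.symm h.symm hb ha (by omega)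
  refine ⟨b - a, by omega, by omega, (positionHom n (g ^ a)).injective ?_⟩
  rw [← Equiv.Perm.mul_apply, ← _root_.map_mul, ← pow_add, Nat.add_sub_cancel' hlt.le]
  exact h.symm

/-- The pair is `(i, g i)` for a position `i` moved by `g`, or arbitrary if `g` moves nothing. -/
theorem exists_fixed_pair {n : ℕ} (hn : 1 ≤ n) (g : ArtinA n) :
    ∃ l i j, 0 < l ∧ l ≤ n + 1 ∧ i < n + 1 ∧ j < n + 1 ∧ i ≠ j ∧
      positionHom n (g ^ l) i = i ∧ positionHom n (g ^ l) j = j := by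
  by_cases h : ∃ i < n + 1, positionHom n g i ≠ i
  · obtain ⟨i, hi, hgi⟩ := h
    obtain ⟨l, hl, hln, hli⟩ := exists_period g hi
    refine ⟨l, i, positionHom n g i, hl, hln, hi, (positionHom_lt g i).2 hi, hgi.symm, hli, ?_⟩
    rw [← Equiv.Perm.mul_apply, ← _root_.map_mul, ← pow_succ, pow_succ', _root_.map_mul,
      Equiv.Perm.mul_apply, hli]
  · push Not at h
    refine ⟨1, 0, 1, one_pos, by omega, by omega, by omega, zero_ne_one, ?_, ?_⟩ <;>
      rw [pow_one] <;> exact h _ (by omega)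

/-- For `k > n + 1`, the generator `(σ₁σ₂⋯σₙ)^(n+1)` of the center of the Artin group
`Aₙ` has no `k`-th root. -/
theorem artinA_no_root (n k : ℕ) (hn : 1 ≤ n) (hk : n + 1 < k) :
    ¬ ∃ g : ArtinA n, g ^ k = deltaA n ^ (n + 1) := by
  rintro ⟨g, hg⟩
  obtain ⟨l, i, j, hl, hln, hi, hj, hij, hli, hlj⟩ := exists_fixed_pair hn g
  obtain ⟨c, hc⟩ := windingHom_apply (g ^ l)
  have h₁ := pow_apply_of_shift (f := windingHom n (g ^ l)) (i := i) (j := j)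
    (fun m => by rw [hc, hli, hlj]) k 0
  have h₂ := pow_apply_of_shift (windingHom_full_twist hi hj hij) l 0
  -- Both describe `g ^ (l * k)`: the counter of `(i, j)` increases by `k * c` and by `l`.
  rw [← map_pow, ← pow_mul, mul_comm, pow_mul, hg, map_pow, h₂] at h₁
  simp only [Prod.mk.injEq, true_and, zero_add, mul_one] at h₁
  have hdvd : k ∣ l := Int.natCast_dvd_natCast.1 ⟨_, h₁⟩
  have := Nat.le_of_dvd hl hdvd
  omega
end

section
/- Let n ≥ 2 and let k > n. Then there is no element g of the Artin group B_n of type B with g^k = (x_1 x_2 ⋯ x_n)^n. -/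
/-! The exponent sum of the last generator `x_n` is a homomorphism `ArtinB n → ℤ`: in every relator
both sides contain `x_n` equally often (braid relators among the first `n - 1` generators do not
involve it). It sends `x₁x₂⋯xₙ` to `1`, hence the `n`-th power of this element to `n`; a `k`-th root
would give `k ∣ n`, impossible for `0 < n < k`. -/


open FreeGroup

/-- Relators of the Artin group of type `Bₙ` (generators `x_1, …, x_n` are indexed by
`Fin n`, with index `i` corresponding to `x_{i+1}`): the braid relation for consecutive
generators in the `Aₙ₋₁`-chain, the length-4 relation for the last pair, and commutation
for `|i-j| ≥ 2`. -/
def ArtinBRels (n : ℕ) : Set (FreeGroup (Fin n)) :=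
  (⋃ (i : Fin n) (j : Fin n) (_ : (i : ℕ) + 1 = (j : ℕ) ∧ (j : ℕ) ≤ n - 2),
    {altProd (of i) (of j) 3 * (altProd (of j) (of i) 3)⁻¹}) ∪
  (⋃ (i : Fin n) (j : Fin n) (_ : (i : ℕ) = n - 2 ∧ (j : ℕ) = n - 1),
    {altProd (of i) (of j) 4 * (altProd (of j) (of i) 4)⁻¹}) ∪
  (⋃ (i : Fin n) (j : Fin n) (_ : (i : ℕ) + 2 ≤ (j : ℕ)),
    {of i * of j * (of j * of i)⁻¹})

/-- The Artin group of type `Bₙ`. -/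
abbrev ArtinB (n : ℕ) : Type := PresentedGroup (ArtinBRels n)

/-- The product `x₁x₂⋯xₙ` of the standard generators of the Artin group `Bₙ`. -/
def deltaB (n : ℕ) : ArtinB n := ((List.finRange n).map fun i => PresentedGroup.of i).prod

/-- The value on the generators of the exponent sum of `x_n`, written multiplicatively. -/
def lastExp (n : ℕ) (i : Fin n) : Multiplicative ℤ :=
  Multiplicative.ofAdd (if (i : ℕ) = n - 1 then 1 else 0)

theorem lastExp_rels (n : ℕ) (hn : 2 ≤ n) :
    ∀ r ∈ ArtinBRels n, FreeGroup.lift (lastExp n) r = 1 := by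
  intro r hr
  simp only [ArtinBRels, Set.mem_union, Set.mem_iUnion, Set.mem_singleton_iff] at hr
  rcases hr with (⟨i, j, h, rfl⟩ | ⟨i, j, h, rfl⟩) | ⟨i, j, h, rfl⟩
  · have hi : ¬ (i : ℕ) = n - 1 := by omega
    have hj : ¬ (j : ℕ) = n - 1 := by omega
    simp [altProd, lastExp, hi, hj]
  · simp only [altProd, _root_.map_mul, _root_.map_inv, FreeGroup.lift_apply_of, mul_one, mul_inv_eq_one]
    ac_rfl
  · simp only [_root_.map_mul, _root_.map_inv, FreeGroup.lift_apply_of, mul_inv_eq_one]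
    exact mul_comm _ _

theorem lastExp_deltaB (n : ℕ) (hn : 2 ≤ n) :
    PresentedGroup.toGroup (lastExp_rels n hn) (deltaB n) = Multiplicative.ofAdd (1 : ℤ) := by
  have hlast : n - 1 < n := by omega
  simp only [deltaB, map_list_prod, List.map_map, Function.comp_def, PresentedGroup.toGroup.of]
  rw [← List.ofFn_eq_map, List.prod_ofFn, Finset.prod_eq_single (⟨n - 1, hlast⟩ : Fin n)]
  · simp [lastExp]
  · intro i _ hi
    have hi' : ¬ (i : ℕ) = n - 1 := fun h => hi (Fin.ext h)
    simp [lastExp, hi']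
  · simp

/-- For `k > n`, the generator `(x₁x₂⋯xₙ)^n` of the center of the Artin group `Bₙ`
has no `k`-th root. -/
theorem artinB_no_root (n k : ℕ) (hn : 2 ≤ n) (hk : n < k) :
    ¬ ∃ g : ArtinB n, g ^ k = deltaB n ^ n := by
  rintro ⟨g, hg⟩
  have h := congrArg (PresentedGroup.toGroup (lastExp_rels n hn)) hg
  rw [map_pow, map_pow, lastExp_deltaB n hn] at h
  have h' := congrArg Multiplicative.toAdd h
  simp only [toAdd_pow, toAdd_ofAdd, nsmul_eq_mul, mul_one] at h'
  have hdvd : (k : ℤ) ∣ n := ⟨_, h'.symm⟩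
  have := Nat.le_of_dvd (by omega) (Int.natCast_dvd_natCast.mp hdvd)
  omega
end

section
/- Let n ≥ 4 be even and let k > n/2. Then there is no element g of the dihedral-type Artin group I_2(n) with g^k = (xy)^{n/2}. -/
/-!
For even `n` both sides of the relation contain equally many letters `x`, so the exponent sum of
`x` is a well-defined homomorphism from `I₂(n)` to `ℤ`. It sends `(xy)^(n/2)` to `n / 2`, so a
`k`-th root would force `k ∣ n / 2`, which is impossible since `0 < n / 2 < k`.
-/

open FreeGroup

theorem altProd_add_self {M : Type*} [Monoid M] (x y : M) (m : ℕ) :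
    altProd x y (m + m) = (x * y) ^ m := by
  induction m with
  | zero => simp [altProd]
  | succ m ih =>
    rw [show m + 1 + (m + 1) = m + m + 1 + 1 by omega, pow_succ', ← ih, mul_assoc]
    rfl

theorem lift_relator_eq_one {A : Type*} [CommGroup A] (f : Fin 2 → A) {n : ℕ} (hne : Even n) :
    ∀ r ∈ ArtinI2Rels n, FreeGroup.lift f r = 1 := by
  obtain ⟨m, rfl⟩ := hne
  rintro r rfl
  simp [altProd_add_self, mul_comm]

/-- For even `n ≥ 4` and `k > n / 2`, the generator `(xy)^(n/2)` of the center of the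
dihedral-type Artin group `I₂(n)` has no `k`-th root. -/
theorem artinI2_even_no_root (n k : ℕ) (hn : 4 ≤ n) (hne : Even n) (hk : n / 2 < k) :
    ¬ ∃ g : ArtinI2 n, g ^ k =
      ((PresentedGroup.of 0 : ArtinI2 n) * PresentedGroup.of 1) ^ (n / 2) := by
  rintro ⟨g, hg⟩
  let φ : ArtinI2 n →* Multiplicative ℤ :=
    PresentedGroup.toGroup (lift_relator_eq_one ![Multiplicative.ofAdd 1, 1] hne)
  have h := congrArg (fun a => Multiplicative.toAdd (φ a)) hg
  have h0 : φ (PresentedGroup.of 0) = Multiplicative.ofAdd 1 := PresentedGroup.toGroup.of _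
  have h1 : φ (PresentedGroup.of 1) = 1 := PresentedGroup.toGroup.of _
  have h01 : φ (PresentedGroup.of 0 * PresentedGroup.of 1) = Multiplicative.ofAdd 1 :=
    (φ.map_mul _ _).trans (by rw [h0, h1, mul_one])
  simp only [map_pow, h01, toAdd_pow, toAdd_ofAdd, nsmul_eq_mul, mul_one] at h
  have hdvd : k ∣ n / 2 := Int.natCast_dvd_natCast.mp ⟨_, h.symm⟩
  have := Nat.le_of_dvd (by omega) hdvd
  omega
end

section
/- Let M = (m_{ij}) be a Coxeter matrix on Fin N and let w and w' be words in the free monoid on N letters which represent the same element of the Artin monoid associated to M. Then exactly the same letters occur in w as in w'; i.e., the set of generators appearing in w equals the set of generators appearing in w'. -/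
/-- The defining congruence of the Artin monoid associated to a Coxeter matrix `M`
(with the Mathlib convention that `M i j = 0` encodes `m_{ij} = ∞`): the congruence on the
free monoid generated by the relations `⟨xᵢ,xⱼ⟩^{m_{ij}} = ⟨xⱼ,xᵢ⟩^{m_{ij}}` for `i ≠ j`
with `m_{ij} < ∞`. -/
def artinMonoidCon {N : ℕ} (M : CoxeterMatrix (Fin N)) : Con (FreeMonoid (Fin N)) :=
  conGen fun a b => ∃ i j : Fin N, i ≠ j ∧ M i j ≠ 0 ∧
    a = altProd (FreeMonoid.of i) (FreeMonoid.of j) (M i j) ∧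
    b = altProd (FreeMonoid.of j) (FreeMonoid.of i) (M i j)

/-- An alternating word of length at least two contains exactly its two letters. -/
theorem mem_altProd_of {α : Type*} (l a b : α) (k : ℕ) :
    l ∈ FreeMonoid.toList (altProd (FreeMonoid.of a) (FreeMonoid.of b) (k + 2)) ↔
      l = a ∨ l = b := by
  induction k generalizing a b with
  | zero => simp [altProd]
  | succ k ih =>
    rw [altProd, FreeMonoid.toList_mul, List.mem_append, ih b a]
    simp only [FreeMonoid.toList_of, List.mem_singleton]
    tauto

/-- The congruence on a free monoid identifying words with the same set of letters. -/
def sameLettersCon (α : Type*) : Con (FreeMonoid α) where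
  r u v := ∀ l, l ∈ FreeMonoid.toList u ↔ l ∈ FreeMonoid.toList v
  iseqv := ⟨fun _ _ => Iff.rfl, fun h l => (h l).symm, fun h h' l => (h l).trans (h' l)⟩
  mul' h h' l := by
    simp only [FreeMonoid.toList_mul, List.mem_append, h l, h' l]

/-- If two words of the free monoid represent the same element of the Artin monoid of a
Coxeter matrix, then exactly the same letters occur in both words. -/
theorem artinMonoid_same_letters {N : ℕ} (M : CoxeterMatrix (Fin N))
    (w w' : FreeMonoid (Fin N))
    (h : (artinMonoidCon M).mk' w = (artinMonoidCon M).mk' w') :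
    {i : Fin N | i ∈ FreeMonoid.toList w} = {i : Fin N | i ∈ FreeMonoid.toList w'} := by
  -- The letter sets are preserved by the generating relations, hence by their congruence.
  have hle : artinMonoidCon M ≤ sameLettersCon (Fin N) := by
    refine Con.conGen_le.mpr ?_
    rintro _ _ ⟨i, j, hij, h0, rfl, rfl⟩ l
    have h1 : M i j ≠ 1 := M.off_diagonal i j hij
    obtain ⟨k, hk⟩ : ∃ k, M i j = k + 2 := ⟨M i j - 2, by omega⟩
    rw [hk, mem_altProd_of, mem_altProd_of]
    exact or_comm
  exact Set.ext (hle ((artinMonoidCon M).eq.mp h))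
end
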